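/- arXiv:2512.22696 — 2 statements merged into one kernel-verified Lean document; each statement's English description precedes it below -/
import Mathlib

section
/- Let a, b, c be pairwise coprime positive integers with c² = a² + b² + ab, and let m be a positive integer such that the equilateral triangle with side length m·ab tiles into m²·ab congruent copies of the triangle with side lengths (a, b, c). Then the triangle with side lengths (m·a·b, m·a·c, m·a·(a+b)) tiles into m²·a·(a+b) congruent copies of the triangle with side lengths (a, b, c). -/
noncomputable section

abbrev Plane := EuclideanSpace ℝ (Fin 2)

/-- The point (x, y) in the Euclidean plane. -/
def pt (x y : ℝ) : Plane := (WithLp.equiv 2 (Fin 2 → ℝ)).symm ![x, y]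

/-- `Δ` is a triangle with side lengths `(p, q, r)`: the convex hull of points `P, Q, R`
with `dist Q R = p`, `dist P R = q`, `dist P Q = r`. -/
def IsTriangle (p q r : ℝ) (Δ : Set Plane) : Prop :=
  ∃ P Q R : Plane, dist Q R = p ∧ dist P R = q ∧ dist P Q = r ∧
    Δ = convexHull ℝ {P, Q, R}

/-- `S` tiles into `N` congruent copies of the `(p, q, r)` triangle: there are isometries
`f 1, …, f N` of the plane and a triangle `Δ` with side lengths `(p, q, r)` such that
`S` is the union of the `f i '' Δ` and their interiors are pairwise disjoint. -/
def TilesInto (S : Set Plane) (N : ℕ) (p q r : ℝ) : Prop :=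
  ∃ (f : Fin N → Plane ≃ᵢ Plane) (Δ : Set Plane),
    IsTriangle p q r Δ ∧
    S = ⋃ i, f i '' Δ ∧
    ∀ i j : Fin N, i ≠ j → interior (f i '' Δ) ∩ interior (f j '' Δ) = ∅

/-- The equilateral triangle with side length `X`. -/
def EquilateralTri (X : ℝ) : Set Plane :=
  convexHull ℝ {pt 0 0, pt X 0, pt (X/2) (X * Real.sqrt 3 / 2)}


theorem pt_apply0 (x y : ℝ) : pt x y 0 = x := by simp [pt]
theorem pt_apply1 (x y : ℝ) : pt x y 1 = y := by simp [pt]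

theorem plane_ext {p q : Plane} (h0 : p 0 = q 0) (h1 : p 1 = q 1) : p = q := by
  ext i
  fin_cases i
  · exact h0
  · exact h1

theorem dist_pt (x y x' y' : ℝ) :
    dist (pt x y) (pt x' y') = Real.sqrt ((x - x') ^ 2 + (y - y') ^ 2) := by
  rw [EuclideanSpace.dist_eq]
  simp [Fin.sum_univ_two, pt_apply0, pt_apply1, Real.dist_eq, sq_abs]

theorem dist_pt_of {x y x' y' d : ℝ} (hd : 0 ≤ d)
    (h : (x - x') ^ 2 + (y - y') ^ 2 = d ^ 2) : dist (pt x y) (pt x' y') = d := by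
  rw [dist_pt, h, Real.sqrt_sq hd]

theorem mem_hull3 {E : Type*} [AddCommGroup E] [Module ℝ E] (A B C p : E) :
    p ∈ convexHull ℝ ({A, B, C} : Set E) ↔
      ∃ α β γ : ℝ, 0 ≤ α ∧ 0 ≤ β ∧ 0 ≤ γ ∧ α + β + γ = 1 ∧ p = α • A + β • B + γ • C := by
  constructor
  · intro hp
    rw [← convexJoin_singleton_segment] at hp
    simp only [mem_convexJoin, Set.mem_singleton_iff, exists_eq_left] at hp
    obtain ⟨q, ⟨s, t, hs, ht, hst, rfl⟩, ⟨u, v, hu, hv, huv, rfl⟩⟩ := hp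
    refine ⟨u, v * s, v * t, hu, by positivity, by positivity, ?_, ?_⟩
    · rw [add_assoc, ← mul_add, hst, mul_one, huv]
    · simp only [smul_add, smul_smul, add_assoc]
  · rintro ⟨α, β, γ, h1, h2, h3, hs, rfl⟩
    have hc := convex_convexHull ℝ ({A, B, C} : Set E)
    have hA : A ∈ convexHull ℝ ({A, B, C} : Set E) := subset_convexHull _ _ (by simp)
    have hB : B ∈ convexHull ℝ ({A, B, C} : Set E) := subset_convexHull _ _ (by simp)
    have hC : C ∈ convexHull ℝ ({A, B, C} : Set E) := subset_convexHull _ _ (by simp)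
    have := hc.sum_mem (t := Finset.univ) (w := ![α, β, γ]) (z := ![A, B, C])
      (by intro i _; fin_cases i <;> simpa) (by simp [Fin.sum_univ_three, hs])
      (by intro i _; fin_cases i <;> simpa)
    simpa [Fin.sum_univ_three] using this

theorem isom_image_hull (g : Plane ≃ᵢ Plane) (A B C : Plane) :
    g '' convexHull ℝ {A, B, C} = convexHull ℝ {g A, g B, g C} := by
  have := g.toRealAffineIsometryEquiv.toAffineEquiv.toAffineMap.image_convexHull
    ({A, B, C} : Set Plane)
  simpa [Set.image_insert_eq] using this

theorem refl_exists (v w : Plane) (h : ‖v‖ = ‖w‖) :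
    ∃ L : Plane ≃ₗᵢ[ℝ] Plane, L v = w ∧ ∀ u, ‖u - v‖ = ‖u - w‖ → L u = u := by
  refine ⟨Submodule.reflection (Submodule.span ℝ {v - w})ᗮ, Submodule.reflection_sub h, ?_⟩
  intro u hu
  apply Submodule.reflection_mem_subspace_eq_self
  rw [Submodule.mem_orthogonal_singleton_iff_inner_right, inner_sub_left]
  have h1 := norm_sub_sq_real u v
  have h2 := norm_sub_sq_real u w
  rw [real_inner_comm] at h1 h2
  rw [hu, h] at h1
  linarith

theorem congr_exists {A B C A' B' C' : Plane} (h1 : dist B C = dist B' C')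
    (h2 : dist A C = dist A' C') (h3 : dist A B = dist A' B') :
    ∃ g : Plane ≃ᵢ Plane, g A = A' ∧ g B = B' ∧ g C = C' := by
  obtain ⟨L1, hL1, -⟩ := refl_exists (B - A) (B' - A')
    (by rw [← dist_eq_norm, ← dist_eq_norm, dist_comm, h3, dist_comm])
  obtain ⟨L2, hL2, hL2'⟩ := refl_exists (L1 (C - A)) (C' - A')
    (by rw [L1.norm_map, ← dist_eq_norm, ← dist_eq_norm, dist_comm, h2, dist_comm])
  have hfix := hL2' (B' - A') (by
    rw [← hL1, ← map_sub, L1.norm_map, hL1, sub_sub_sub_cancel_right, sub_sub_sub_cancel_right,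
      ← dist_eq_norm, ← dist_eq_norm, h1])
  refine ⟨((IsometryEquiv.subRight A).trans (L1.trans L2).toIsometryEquiv).trans
    (IsometryEquiv.addRight A'), ?_, ?_, ?_⟩
  · simp
  · simp [← map_sub, hL1, hfix]
  · simp [← map_sub, hL2]

theorem tri_congr {p q r : ℝ} {D D' : Set Plane} (h : IsTriangle p q r D)
    (h' : IsTriangle p q r D') : ∃ g : Plane ≃ᵢ Plane, g '' D = D' := by
  obtain ⟨A, B, C, h1, h2, h3, rfl⟩ := h
  obtain ⟨A', B', C', h1', h2', h3', rfl⟩ := h'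
  obtain ⟨g, hA, hB, hC⟩ := congr_exists (h1.trans h1'.symm) (h2.trans h2'.symm) (h3.trans h3'.symm)
  exact ⟨g, by rw [isom_image_hull, hA, hB, hC]⟩

theorem tiles_of_fintype {ι : Type} [Fintype ι] {S : Set Plane} {N : ℕ} {p q r : ℝ}
    (hN : Fintype.card ι = N) (f : ι → Plane ≃ᵢ Plane) (D : Set Plane)
    (hD : IsTriangle p q r D) (hS : S = ⋃ i, f i '' D)
    (hd : ∀ i j, i ≠ j → interior (f i '' D) ∩ interior (f j '' D) = ∅) :
    TilesInto S N p q r := by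
  let e := (Fintype.equivFinOfCardEq hN).symm
  refine ⟨fun i => f (e i), D, hD, ?_, fun i j hij => hd _ _ (e.injective.ne hij)⟩
  rw [hS]
  exact (e.surjective.iUnion_comp (fun i => f i '' D)).symm

theorem tiles_union {S T : Set Plane} {M N : ℕ} {p q r : ℝ}
    (hS : TilesInto S M p q r) (hT : TilesInto T N p q r)
    (hd : interior S ∩ interior T = ∅) : TilesInto (S ∪ T) (M + N) p q r := by
  obtain ⟨f, D, hD, hSf, hf⟩ := hS
  obtain ⟨f', D', hD', hTf, hf'⟩ := hT
  obtain ⟨g, rfl⟩ := tri_congr hD hD'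
  have him : ∀ j, (g.trans (f' j)) '' D = f' j '' (g '' D) := fun j => by
    rw [← Set.image_comp]; rfl
  have key : ∀ i j, interior (f i '' D) ∩ interior (f' j '' (g '' D)) = ∅ := by
    intro i j
    rw [← Set.subset_empty_iff, ← hd]
    apply Set.inter_subset_inter <;> apply interior_mono
    · rw [hSf]; exact Set.subset_iUnion (fun i => f i '' D) i
    · rw [hTf]; exact Set.subset_iUnion (fun i => f' i '' (g '' D)) j
  refine tiles_of_fintype (ι := Fin M ⊕ Fin N) (by simp)
    (Sum.elim f (fun j => g.trans (f' j))) D hD ?_ ?_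
  · rw [Set.iUnion_sum]
    simp only [Sum.elim_inl, Sum.elim_inr, him]
    rw [← hSf, ← hTf]
  · rintro (i | i) (j | j) hij
    · exact hf i j (by simpa using hij)
    · simpa only [Sum.elim_inl, Sum.elim_inr, him] using key i j
    · simp only [Sum.elim_inl, Sum.elim_inr, him]; rw [Set.inter_comm]; exact key j i
    · simp only [Sum.elim_inr, him]
      exact hf' i j (by simpa using hij)

theorem tiles_image {S : Set Plane} {M : ℕ} {p q r : ℝ} (g : Plane ≃ᵢ Plane)
    (hS : TilesInto S M p q r) : TilesInto (g '' S) M p q r := by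
  obtain ⟨f, D, hD, rfl, hf⟩ := hS
  have him : ∀ j, ((f j).trans g) '' D = g '' (f j '' D) := fun j => by
    rw [← Set.image_comp]; rfl
  refine ⟨fun i => (f i).trans g, D, hD, ?_, ?_⟩
  · simp only [him, Set.image_iUnion]
  · intro i j hij
    have := g.toHomeomorph.image_interior
    simp only [IsometryEquiv.coe_toHomeomorph] at this
    rw [him, him, ← this, ← this, ← Set.image_inter g.injective, hf i j hij, Set.image_empty]

/-- Oblique coordinates on the plane. -/
def obl (X a b : ℝ) (ha : a ≠ 0) (hb : b ≠ 0) : (ℝ × ℝ) ≃ₜ Plane where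
  toFun p := pt (X + a * p.1 - b / 2 * p.2) (b * Real.sqrt 3 / 2 * p.2)
  invFun q := ((q 0 - X + q 1 / Real.sqrt 3) / a, q 1 * 2 / (b * Real.sqrt 3))
  left_inv p := by
    have : Real.sqrt 3 ≠ 0 := by positivity
    ext <;> simp only [pt_apply0, pt_apply1] <;> field_simp <;> ring
  right_inv q := by
    have : Real.sqrt 3 ≠ 0 := by positivity
    apply plane_ext <;> simp only [pt_apply0, pt_apply1] <;> field_simp <;> ring
  continuous_toFun := by
    unfold pt
    refine (PiLp.continuous_toLp 2 _).comp ?_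
    refine continuous_pi fun i => ?_
    fin_cases i <;> simp <;> fun_prop
  continuous_invFun := by fun_prop

section
variable (X a b : ℝ) (ha : a ≠ 0) (hb : b ≠ 0)

theorem obl_apply (x y : ℝ) :
    obl X a b ha hb (x, y) = pt (X + a * x - b / 2 * y) (b * Real.sqrt 3 / 2 * y) := rfl

theorem obl_hull (A B C : ℝ × ℝ) : obl X a b ha hb '' convexHull ℝ {A, B, C} =
    convexHull ℝ {obl X a b ha hb A, obl X a b ha hb B, obl X a b ha hb C} := by
  have key : ∀ α β γ : ℝ, α + β + γ = 1 → obl X a b ha hb (α • A + β • B + γ • C) =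
      α • obl X a b ha hb A + β • obl X a b ha hb B + γ • obl X a b ha hb C := by
    intro α β γ h
    obtain ⟨A1, A2⟩ := A
    obtain ⟨B1, B2⟩ := B
    obtain ⟨C1, C2⟩ := C
    have h' : γ = 1 - α - β := by linarith
    subst h'
    apply plane_ext <;> simp [obl_apply, pt_apply0, pt_apply1] <;> ring
  ext p
  simp only [Set.mem_image, mem_hull3]
  constructor
  · rintro ⟨_, ⟨α, β, γ, h1, h2, h3, h4, rfl⟩, rfl⟩
    exact ⟨α, β, γ, h1, h2, h3, h4, key _ _ _ h4⟩
  · rintro ⟨α, β, γ, h1, h2, h3, h4, rfl⟩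
    exact ⟨_, ⟨α, β, γ, h1, h2, h3, h4, rfl⟩, key _ _ _ h4⟩

end

theorem std_hull (n : ℝ) (hn : 0 < n) :
    convexHull ℝ ({(0, n), (n, 0), (0, 0)} : Set (ℝ × ℝ)) =
      {p | 0 ≤ p.1 ∧ 0 ≤ p.2 ∧ p.1 + p.2 ≤ n} := by
  ext ⟨x, y⟩
  rw [mem_hull3]
  constructor
  · rintro ⟨α, β, γ, h1, h2, h3, h4, h⟩
    simp at h
    obtain ⟨rfl, rfl⟩ := h
    refine ⟨by positivity, by positivity, ?_⟩
    simp only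
    nlinarith
  · rintro ⟨h1, h2, h3⟩
    simp only at h1 h2 h3
    refine ⟨y / n, x / n, (n - x - y) / n, by positivity, by positivity,
      div_nonneg (by linarith) hn.le, by field_simp; ring, ?_⟩
    ext <;> simp <;> field_simp

theorem isOpenMap_addp : IsOpenMap (fun p : ℝ × ℝ => p.1 + p.2) := by
  have := (Homeomorph.shearAddRight ℝ).isOpenMap
  exact isOpenMap_snd.comp this

theorem int_ge {f : ℝ × ℝ → ℝ} (hf : IsOpenMap f) (hc : Continuous f) {S : Set (ℝ × ℝ)} {t : ℝ}
    (hS : ∀ p ∈ S, t ≤ f p) {p : ℝ × ℝ} (hp : p ∈ interior S) : t < f p := by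
  have : p ∈ interior (f ⁻¹' Set.Ici t) := interior_mono (fun q hq => hS q hq) hp
  rw [← hf.preimage_interior_eq_interior_preimage hc, interior_Ici] at this
  exact this

theorem int_le {f : ℝ × ℝ → ℝ} (hf : IsOpenMap f) (hc : Continuous f) {S : Set (ℝ × ℝ)} {t : ℝ}
    (hS : ∀ p ∈ S, f p ≤ t) {p : ℝ × ℝ} (hp : p ∈ interior S) : f p < t := by
  have : p ∈ interior (f ⁻¹' Set.Iic t) := interior_mono (fun q hq => hS q hq) hp
  rw [← hf.preimage_interior_eq_interior_preimage hc, interior_Iic] at this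
  exact this

/-- Upward cell. -/
def upC (i j : ℕ) : Set (ℝ × ℝ) := {p | (i : ℝ) ≤ p.1 ∧ (j : ℝ) ≤ p.2 ∧ p.1 + p.2 ≤ i + j + 1}
/-- Downward cell. -/
def dnC (i j : ℕ) : Set (ℝ × ℝ) :=
  {p | p.1 ≤ i + 1 ∧ p.2 ≤ j + 1 ∧ (i : ℝ) + j + 1 ≤ p.1 + p.2}

theorem int_up {i j : ℕ} {p : ℝ × ℝ} (hp : p ∈ interior (upC i j)) :
    (i : ℝ) < p.1 ∧ (j : ℝ) < p.2 ∧ p.1 + p.2 < i + j + 1 :=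
  ⟨int_ge isOpenMap_fst continuous_fst (fun _ h => h.1) hp,
   int_ge isOpenMap_snd continuous_snd (fun _ h => h.2.1) hp,
   int_le isOpenMap_addp (by fun_prop) (fun _ h => h.2.2) hp⟩

theorem int_dn {i j : ℕ} {p : ℝ × ℝ} (hp : p ∈ interior (dnC i j)) :
    p.1 < i + 1 ∧ p.2 < j + 1 ∧ (i : ℝ) + j + 1 < p.1 + p.2 :=
  ⟨int_le isOpenMap_fst continuous_fst (fun _ h => h.1) hp,
   int_le isOpenMap_snd continuous_snd (fun _ h => h.2.1) hp,
   int_ge isOpenMap_addp (by fun_prop) (fun _ h => h.2.2) hp⟩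

theorem nat_eq_of {x : ℝ} {i j : ℕ} (h1 : (i : ℝ) < x) (h2 : x < i + 1) (h3 : (j : ℝ) < x)
    (h4 : x < j + 1) : i = j := by
  have a1 : (i : ℝ) < (j + 1 : ℕ) := by push_cast; linarith
  have a2 : (j : ℝ) < (i + 1 : ℕ) := by push_cast; linarith
  have := Nat.cast_lt.1 a1
  have := Nat.cast_lt.1 a2
  omega

/-- The cells of the quadratic tiling. -/
def cell (n : ℕ) (k : Fin n × Fin n) : Set (ℝ × ℝ) :=
  if k.1.val + k.2.val < n then upC k.1 k.2 else dnC (n - 1 - k.1) (n - 1 - k.2)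

theorem cell_disj (n : ℕ) (k l : Fin n × Fin n) (hkl : k ≠ l) :
    interior (cell n k) ∩ interior (cell n l) = ∅ := by
  rw [Set.eq_empty_iff_forall_notMem]
  rintro p ⟨hk, hl⟩
  apply hkl
  obtain ⟨⟨k1, hk1⟩, ⟨k2, hk2⟩⟩ := k
  obtain ⟨⟨l1, hl1⟩, ⟨l2, hl2⟩⟩ := l
  simp only [Prod.mk.injEq, Fin.mk.injEq]
  unfold cell at hk hl
  simp only at hk hl
  split_ifs at hk hl with c1 c2 c2
  · obtain ⟨a1, a2, a3⟩ := int_up hk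
    obtain ⟨b1, b2, b3⟩ := int_up hl
    exact ⟨nat_eq_of a1 (by linarith) b1 (by linarith), nat_eq_of a2 (by linarith) b2 (by linarith)⟩
  · exfalso
    obtain ⟨a1, a2, a3⟩ := int_up hk
    obtain ⟨b1, b2, b3⟩ := int_dn hl
    have e1 := nat_eq_of a1 (by linarith) (by linarith) b1
    have e2 := nat_eq_of a2 (by linarith) (by linarith) b2
    rw [← e1, ← e2] at b3
    linarith
  · exfalso
    obtain ⟨a1, a2, a3⟩ := int_up hl
    obtain ⟨b1, b2, b3⟩ := int_dn hk
    have e1 := nat_eq_of a1 (by linarith) (by linarith) b1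
    have e2 := nat_eq_of a2 (by linarith) (by linarith) b2
    rw [← e1, ← e2] at b3
    linarith
  · obtain ⟨a1, a2, a3⟩ := int_dn hk
    obtain ⟨b1, b2, b3⟩ := int_dn hl
    have e1 := nat_eq_of (by linarith) a1 (by linarith) b1
    have e2 := nat_eq_of (by linarith) a2 (by linarith) b2
    omega

theorem cell_cover (n : ℕ) (hn : 0 < n) :
    {p : ℝ × ℝ | 0 ≤ p.1 ∧ 0 ≤ p.2 ∧ p.1 + p.2 ≤ n} = ⋃ k, cell n k := by
  have up : ∀ i j : ℕ, i + j < n → ∀ p ∈ upC i j, p ∈ ⋃ k, cell n k := by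
    intro i j h p hp
    refine Set.mem_iUnion.2 ⟨(⟨i, by omega⟩, ⟨j, by omega⟩), ?_⟩
    simpa [cell, h] using hp
  have dn : ∀ i j : ℕ, i + j + 2 ≤ n → ∀ p ∈ dnC i j, p ∈ ⋃ k, cell n k := by
    intro i j h p hp
    refine Set.mem_iUnion.2 ⟨(⟨n - 1 - i, by omega⟩, ⟨n - 1 - j, by omega⟩), ?_⟩
    have h1 : ¬ (n - 1 - i + (n - 1 - j) < n) := by omega
    have h2 : n - 1 - (n - 1 - i) = i := by omega
    have h3 : n - 1 - (n - 1 - j) = j := by omega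
    simpa only [cell, h1, h2, h3, if_false] using hp
  apply Set.Subset.antisymm
  · rintro ⟨x, y⟩ ⟨hx, hy, hxy⟩
    simp only at hx hy hxy
    have f1 := Nat.floor_le hx
    have f2 := Nat.lt_floor_add_one x
    have g1 := Nat.floor_le hy
    have g2 := Nat.lt_floor_add_one y
    generalize ⌊x⌋₊ = i at *
    generalize ⌊y⌋₊ = j at *
    have hij : i + j ≤ n := by
      have : ((i + j : ℕ) : ℝ) ≤ n := by push_cast; linarith
      exact_mod_cast this
    rcases (by omega : i + j = n ∨ i + j + 1 = n ∨ i + j + 2 ≤ n) with h | h | h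
    · have hr : (i : ℝ) + j = n := by exact_mod_cast h
      rcases Nat.eq_zero_or_pos i with h0 | h0
      · obtain ⟨j', rfl⟩ : ∃ j', j = j' + 1 := ⟨j - 1, by omega⟩
        push_cast at *
        exact up i j' (by omega) _ ⟨f1, by simp only; linarith, by simp only; linarith⟩
      · obtain ⟨i', rfl⟩ : ∃ i', i = i' + 1 := ⟨i - 1, by omega⟩
        push_cast at *
        exact up i' j (by omega) _ ⟨by simp only; linarith, g1, by simp only; linarith⟩
    · have hr : (i : ℝ) + j + 1 = n := by exact_mod_cast h
      exact up i j (by omega) _ ⟨f1, g1, by simp only; linarith⟩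
    · rcases le_total (x + y) (i + j + 1) with h' | h'
      · exact up i j (by omega) _ ⟨f1, g1, h'⟩
      · exact dn i j (by omega) _ ⟨f2.le, g2.le, h'⟩
  · refine Set.iUnion_subset ?_
    rintro ⟨⟨k1, hk1⟩, ⟨k2, hk2⟩⟩ ⟨x, y⟩ hp
    unfold cell at hp
    simp only at hp
    split_ifs at hp with c
    · obtain ⟨a1, a2, a3⟩ := hp
      have c' : (k1 : ℝ) + k2 + 1 ≤ n := by exact_mod_cast c
      have := Nat.cast_nonneg (α := ℝ) k1
      have := Nat.cast_nonneg (α := ℝ) k2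
      exact ⟨by linarith, by linarith, by linarith⟩
    · obtain ⟨a1, a2, a3⟩ := hp
      have c' : n - 1 - k1 + (n - 1 - k2) + 2 ≤ n := by omega
      generalize n - 1 - k1 = i at *
      generalize n - 1 - k2 = j at *
      have c'' : (i : ℝ) + j + 2 ≤ n := by exact_mod_cast c'
      have := Nat.cast_nonneg (α := ℝ) i
      have := Nat.cast_nonneg (α := ℝ) j
      simp only at a1 a2 a3
      exact ⟨by simp only; linarith, by simp only; linarith, by simp only; linarith⟩

theorem quad_tiles (X a b c : ℝ) (ha : 0 < a) (hb : 0 < b) (hc : 0 < c)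
    (h : c ^ 2 = a ^ 2 + b ^ 2 + a * b) (n : ℕ) (hn : 0 < n) :
    TilesInto (obl X a b ha.ne' hb.ne' '' convexHull ℝ {(0, (n : ℝ)), ((n : ℝ), 0), (0, 0)})
      (n * n) a b c := by
  set G := obl X a b ha.ne' hb.ne' with hG
  have s3 : Real.sqrt 3 ^ 2 = 3 := Real.sq_sqrt (by norm_num)
  let f : Fin n × Fin n → Plane ≃ᵢ Plane := fun k =>
    if k.1.val + k.2.val < n then IsometryEquiv.addRight (G (k.1, k.2) - G (0, 0))
    else IsometryEquiv.subLeft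
      (G (((n - 1 - k.1 : ℕ) : ℝ) + 1, ((n - 1 - k.2 : ℕ) : ℝ) + 1) + G (0, 0))
  have hf : ∀ k, f k '' (G '' convexHull ℝ {(0, 1), (1, 0), (0, 0)}) = G '' cell n k := by
    intro k
    rw [std_hull 1 one_pos]
    simp only [f, cell]
    split_ifs with hk
    · generalize k.1.val = i
      generalize k.2.val = j
      have e : ∀ x y : ℝ, G (x, y) + (G (i, j) - G (0, 0)) = G (x + i, y + j) := by
        intro x y
        apply plane_ext <;> simp [hG, obl_apply, pt_apply0, pt_apply1] <;> ring
      ext q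
      constructor
      · rintro ⟨_, ⟨⟨x, y⟩, ⟨h1, h2, h3⟩, rfl⟩, rfl⟩
        simp only at h1 h2 h3
        exact ⟨(x + i, y + j), ⟨by simp only; linarith, by simp only; linarith,
          by simp only; linarith⟩, (e x y).symm⟩
      · rintro ⟨⟨x, y⟩, ⟨h1, h2, h3⟩, rfl⟩
        simp only at h1 h2 h3
        refine ⟨_, ⟨(x - i, y - j), ⟨by simp only; linarith, by simp only; linarith,
          by simp only; linarith⟩, rfl⟩, (e _ _).trans ?_⟩
        simp
    · generalize n - 1 - k.1.val = i
      generalize n - 1 - k.2.val = j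
      have e : ∀ x y : ℝ, G ((i : ℝ) + 1, (j : ℝ) + 1) + G (0, 0) - G (x, y)
          = G (i + 1 - x, j + 1 - y) := by
        intro x y
        apply plane_ext <;> simp [hG, obl_apply, pt_apply0, pt_apply1] <;> ring
      ext q
      constructor
      · rintro ⟨_, ⟨⟨x, y⟩, ⟨h1, h2, h3⟩, rfl⟩, rfl⟩
        simp only at h1 h2 h3
        exact ⟨(i + 1 - x, j + 1 - y), ⟨by simp only; linarith, by simp only; linarith,
          by simp only; linarith⟩, (e x y).symm⟩
      · rintro ⟨⟨x, y⟩, ⟨h1, h2, h3⟩, rfl⟩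
        simp only at h1 h2 h3
        refine ⟨_, ⟨(i + 1 - x, j + 1 - y), ⟨by simp only; linarith, by simp only; linarith,
          by simp only; linarith⟩, rfl⟩, (e _ _).trans ?_⟩
        simp
  refine tiles_of_fintype (ι := Fin n × Fin n) (by simp) f
    (G '' convexHull ℝ {(0, 1), (1, 0), (0, 0)}) ?_ ?_ ?_
  · refine ⟨G (0, 1), G (1, 0), G (0, 0), ?_, ?_, ?_, obl_hull _ _ _ _ _ _ _ _⟩ <;>
      rw [hG, obl_apply, obl_apply] <;> apply dist_pt_of (by positivity)
    · ring
    · ring_nf; rw [s3]; ring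
    · rw [h]; ring_nf; rw [s3]; ring
  · simp only [hf]
    rw [std_hull n (by positivity), cell_cover n hn, Set.image_iUnion]
  · intro i j hij
    rw [hf, hf, ← G.image_interior, ← G.image_interior, ← Set.image_inter G.injective,
      cell_disj n i j hij, Set.image_empty]

theorem hull_split (n k : ℝ) (hn : 0 < n) (hk : 0 < k) :
    convexHull ℝ ({(n, 0), (-k, 0), (0, n)} : Set (ℝ × ℝ)) =
      convexHull ℝ {(-k, 0), (0, 0), (0, n)} ∪ convexHull ℝ {(0, n), (n, 0), (0, 0)} := by
  ext ⟨x, y⟩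
  rw [Set.mem_union, mem_hull3, mem_hull3, mem_hull3]
  simp only [Prod.smul_mk, Prod.mk_add_mk, Prod.mk.injEq, smul_eq_mul, mul_zero, add_zero, zero_add]
  constructor
  · rintro ⟨α, β, γ, h1, h2, h3, h4, rfl, rfl⟩
    rcases le_total (α * n) (β * k) with h | h
    · refine Or.inl ⟨β - α * n / k, α + α * n / k, γ, ?_, by positivity, h3, by linarith, ?_, rfl⟩
      · rw [sub_nonneg, div_le_iff₀ hk]; exact h
      · field_simp; ring
    · refine Or.inr ⟨γ, α - β * k / n, β + β * k / n, h3, ?_, by positivity, by linarith, ?_, rfl⟩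
      · rw [sub_nonneg, div_le_iff₀ hn]; exact h
      · field_simp; ring
  · rintro (⟨α, β, γ, h1, h2, h3, h4, rfl, rfl⟩ | ⟨α, β, γ, h1, h2, h3, h4, rfl, rfl⟩)
    · refine ⟨β * k / (n + k), α + β * n / (n + k), γ, by positivity, by positivity, h3, ?_, ?_, rfl⟩
      · rw [← h4]; field_simp; ring
      · field_simp; ring
    · refine ⟨β + γ * k / (n + k), γ * n / (n + k), α, by positivity, by positivity, h1, ?_, ?_, rfl⟩
      · rw [← h4]; field_simp; ring
      · field_simp; ring

theorem split_disj (n k : ℝ) (hn : 0 < n) (hk : 0 < k) :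
    interior (convexHull ℝ ({(-k, 0), (0, 0), (0, n)} : Set (ℝ × ℝ))) ∩
      interior (convexHull ℝ {(0, n), (n, 0), (0, 0)}) = ∅ := by
  rw [Set.eq_empty_iff_forall_notMem]
  rintro p ⟨hp, hq⟩
  have h1 := int_le (t := 0) isOpenMap_fst continuous_fst (by
    rintro ⟨x, y⟩ h
    obtain ⟨α, β, γ, h1, h2, h3, h4, h⟩ := (mem_hull3 _ _ _ _).1 h
    simp at h
    rw [h.1]
    have := mul_nonneg h1 hk.le
    linarith) hp
  have h2 := int_ge (t := 0) isOpenMap_fst continuous_fst (by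
    rintro ⟨x, y⟩ h
    rw [std_hull n hn] at h
    exact h.1) hq
  linarith

theorem stmt16 (a b c : ℕ) (ha : 0 < a) (hb : 0 < b) (hc : 0 < c)
    (hab : Nat.Coprime a b) (hac : Nat.Coprime a c) (hbc : Nat.Coprime b c)
    (h : c ^ 2 = a ^ 2 + b ^ 2 + a * b) (m : ℕ) (hm : 0 < m)
    (heq : TilesInto (EquilateralTri ((m : ℝ) * a * b)) (m ^ 2 * a * b) a b c) :
    ∀ Δ : Set Plane,
      IsTriangle ((m : ℝ) * a * b) ((m : ℝ) * a * c) ((m : ℝ) * a * (a + b)) Δ →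
      TilesInto Δ (m ^ 2 * a * (a + b)) a b c := by
  intro D hD
  have ha' : (0 : ℝ) < a := by exact_mod_cast ha
  have hb' : (0 : ℝ) < b := by exact_mod_cast hb
  have hc' : (0 : ℝ) < c := by exact_mod_cast hc
  have hm' : (0 : ℝ) < m := by exact_mod_cast hm
  have h' : (c : ℝ) ^ 2 = a ^ 2 + b ^ 2 + a * b := by exact_mod_cast h
  have s3 : Real.sqrt 3 ^ 2 = 3 := Real.sq_sqrt (by norm_num)
  have hq := quad_tiles ((m : ℝ) * a * b) a b c ha' hb' hc' h' (m * a) (by positivity)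
  set G := obl ((m : ℝ) * a * b) a b ha'.ne' hb'.ne' with hG
  push_cast at hq
  have hE : EquilateralTri ((m : ℝ) * a * b) =
      G '' convexHull ℝ {(-((m : ℝ) * b), 0), (0, 0), (0, (m : ℝ) * a)} := by
    rw [hG, obl_hull, obl_apply, obl_apply, obl_apply, EquilateralTri]
    have e1 : pt 0 0 = pt ((m : ℝ) * a * b + a * -((m : ℝ) * b) - b / 2 * 0)
        (b * Real.sqrt 3 / 2 * 0) := by congr 1 <;> ring
    have e2 : pt ((m : ℝ) * a * b) 0 = pt ((m : ℝ) * a * b + a * 0 - b / 2 * 0)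
        (b * Real.sqrt 3 / 2 * 0) := by congr 1 <;> ring
    have e3 : pt ((m : ℝ) * a * b / 2) ((m : ℝ) * a * b * Real.sqrt 3 / 2) =
        pt ((m : ℝ) * a * b + a * 0 - b / 2 * ((m : ℝ) * a))
        (b * Real.sqrt 3 / 2 * ((m : ℝ) * a)) := by congr 1 <;> ring
    rw [e1, e2, e3]
  have hT : IsTriangle ((m : ℝ) * a * b) ((m : ℝ) * a * c) ((m : ℝ) * a * (a + b))
      (G '' convexHull ℝ {((m : ℝ) * a, 0), (-((m : ℝ) * b), 0), (0, (m : ℝ) * a)}) := by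
    refine ⟨_, _, _, ?_, ?_, ?_, obl_hull _ _ _ _ _ _ _ _⟩ <;>
      rw [obl_apply, obl_apply] <;> apply dist_pt_of (by positivity)
    · ring_nf; rw [s3]; ring
    · rw [mul_pow _ (c : ℝ), h']; ring_nf; rw [s3]; ring
    · ring
  obtain ⟨g, rfl⟩ := tri_congr hT hD
  apply tiles_image
  rw [hull_split _ _ (by positivity) (by positivity), Set.image_union]
  rw [hE] at heq
  have := tiles_union heq hq (by
    rw [← G.image_interior, ← G.image_interior, ← Set.image_inter G.injective,
      split_disj _ _ (by positivity) (by positivity), Set.image_empty])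
  convert this using 1
  ring
end
end

section
/- Let a, b, c be pairwise coprime positive integers with c² = a² + b² + ab, and let m be a positive integer such that the equilateral triangle with side length m·ab tiles into m²·ab congruent copies of the triangle with side lengths (a, b, c). Then the triangle with side lengths (m·b·c, m·a·(a+2b), m·c·(a+b)) tiles into m²·(a+2b)·(a+b) congruent copies of the triangle with side lengths (a, b, c). -/
noncomputable section

/-- Auxiliary: unordered version of a tiling, by a finite family of triangles. -/
def Tiles (p q r : ℝ) (S : Set Plane) (N : ℕ) : Prop :=
  ∃ (ι : Type) (_ : Fintype ι) (T : ι → Set Plane), Fintype.card ι = N ∧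
    (∀ i, IsTriangle p q r (T i)) ∧ S = ⋃ i, T i ∧
    ∀ i j, i ≠ j → interior (T i) ∩ interior (T j) = ∅

lemma dist_iff' (x y : Plane) {r : ℝ} (hr : 0 ≤ r) :
    dist x y = r ↔ (x 0 - y 0) ^ 2 + (x 1 - y 1) ^ 2 = r ^ 2 := by
  rw [EuclideanSpace.dist_eq, Real.sqrt_eq_iff_eq_sq (by positivity) hr]
  simp [Fin.sum_univ_two, Real.dist_eq, sq_abs]

lemma mem_tri (P Q R x : Plane) : x ∈ convexHull ℝ {P, Q, R} ↔
    ∃ s t : ℝ, 0 ≤ s ∧ 0 ≤ t ∧ s + t ≤ 1 ∧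
      x 0 = P 0 + s * (Q 0 - P 0) + t * (R 0 - P 0) ∧
      x 1 = P 1 + s * (Q 1 - P 1) + t * (R 1 - P 1) := by
  constructor
  · intro hx
    have : convexHull ℝ {P, Q, R} ⊆ {x : Plane | ∃ s t : ℝ, 0 ≤ s ∧ 0 ≤ t ∧ s + t ≤ 1 ∧
      x 0 = P 0 + s * (Q 0 - P 0) + t * (R 0 - P 0) ∧
      x 1 = P 1 + s * (Q 1 - P 1) + t * (R 1 - P 1)} := by
      apply convexHull_min
      · intro y hy
        rcases hy with rfl | rfl | rfl
        · exact ⟨0, 0, by simp⟩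
        · exact ⟨1, 0, by simp⟩
        · exact ⟨0, 1, by simp⟩
      · rintro y ⟨s, t, hs, ht, hst, h0, h1⟩ z ⟨s', t', hs', ht', hst', h0', h1'⟩ p q hp hq hpq
        refine ⟨p * s + q * s', p * t + q * t', by positivity, by positivity, ?_, ?_, ?_⟩
        · nlinarith
        · have : p = 1 - q := by linarith
          subst this
          simp only [PiLp.add_apply, PiLp.smul_apply, smul_eq_mul, h0, h0']
          ring
        · have : p = 1 - q := by linarith
          subst this
          simp only [PiLp.add_apply, PiLp.smul_apply, smul_eq_mul, h1, h1']
          ring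
    exact this hx
  · rintro ⟨s, t, hs, ht, hst, h0, h1⟩
    refine mem_convexHull_of_exists_fintype (ι := Fin 3) ![1 - s - t, s, t] ![P, Q, R] ?_ ?_ ?_ ?_
    · intro i; fin_cases i <;> simp <;> linarith
    · simp [Fin.sum_univ_three]; ring
    · intro i; fin_cases i <;> simp
    · ext i
      fin_cases i
      · simp [Fin.sum_univ_three, h0]; ring
      · simp [Fin.sum_univ_three, h1]; ring

lemma interior_pos (S : Set Plane) (p q r : ℝ) (hpq : p ≠ 0 ∨ q ≠ 0)
    (hS : ∀ x ∈ S, 0 ≤ p * x 0 + q * x 1 + r) (x : Plane) (hx : x ∈ interior S) :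
    0 < p * x 0 + q * x 1 + r := by
  have hc : Continuous (fun δ : ℝ => x - δ • pt p q) := by fun_prop
  have ho : IsOpen ((fun δ : ℝ => x - δ • pt p q) ⁻¹' interior S) := isOpen_interior.preimage hc
  have h0 : (0 : ℝ) ∈ ((fun δ : ℝ => x - δ • pt p q) ⁻¹' interior S) := by simpa using hx
  obtain ⟨ε, hε, hb⟩ := Metric.isOpen_iff.1 ho 0 h0
  have h1 : ε / 2 ∈ Metric.ball (0 : ℝ) ε := by
    simp [abs_of_pos hε]; exact hε
  have h2 := hS _ (interior_subset (hb h1))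
  simp [pt] at h2
  have h3 : 0 < p ^ 2 + q ^ 2 := by
    rcases hpq with h | h <;> positivity
  nlinarith

lemma isometry_hull (f : Plane ≃ᵢ Plane) (P Q R : Plane) :
    f '' convexHull ℝ {P, Q, R} = convexHull ℝ {f P, f Q, f R} := by
  have h := (f.toRealAffineIsometryEquiv.toAffineEquiv.toAffineMap).image_convexHull {P, Q, R}
  have e : ⇑(f.toRealAffineIsometryEquiv.toAffineEquiv.toAffineMap) = f := rfl
  rw [e] at h
  rw [h]
  simp [Set.image_insert_eq]

lemma sss (P Q R P' Q' R' : Plane) (hPQ : P ≠ Q) (h1 : dist P Q = dist P' Q')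
    (h2 : dist P R = dist P' R') (h3 : dist Q R = dist Q' R') :
    ∃ f : Plane ≃ᵢ Plane, f P = P' ∧ f Q = Q' ∧ f R = R' := by
  have hd : 0 < dist P' Q' := by rw [← h1]; exact dist_pos.2 hPQ
  rw [dist_iff' _ _ dist_nonneg, ← (dist_iff' P' Q' dist_nonneg).1 rfl] at h1
  rw [dist_iff' _ _ dist_nonneg, ← (dist_iff' P' R' dist_nonneg).1 rfl] at h2
  rw [dist_iff' _ _ dist_nonneg, ← (dist_iff' Q' R' dist_nonneg).1 rfl] at h3
  have hd' : (P' 0 - Q' 0) ^ 2 + (P' 1 - Q' 1) ^ 2 ≠ 0 := by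
    rw [(dist_iff' P' Q' dist_nonneg).1 rfl]; positivity
  clear hd hPQ
  obtain ⟨w0, hw0⟩ : ∃ w, w = Q 0 - P 0 := ⟨_, rfl⟩
  obtain ⟨w1, hw1⟩ : ∃ w, w = Q 1 - P 1 := ⟨_, rfl⟩
  obtain ⟨z0, hz0⟩ : ∃ w, w = R 0 - P 0 := ⟨_, rfl⟩
  obtain ⟨z1, hz1⟩ : ∃ w, w = R 1 - P 1 := ⟨_, rfl⟩
  obtain ⟨w0', hw0'⟩ : ∃ w, w = Q' 0 - P' 0 := ⟨_, rfl⟩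
  obtain ⟨w1', hw1'⟩ : ∃ w, w = Q' 1 - P' 1 := ⟨_, rfl⟩
  obtain ⟨z0', hz0'⟩ : ∃ w, w = R' 0 - P' 0 := ⟨_, rfl⟩
  obtain ⟨z1', hz1'⟩ : ∃ w, w = R' 1 - P' 1 := ⟨_, rfl⟩
  have eq0 : Q 0 = P 0 + w0 := by linarith
  have eq1 : Q 1 = P 1 + w1 := by linarith
  have er0 : R 0 = P 0 + z0 := by linarith
  have er1 : R 1 = P 1 + z1 := by linarith
  have eq0' : Q' 0 = P' 0 + w0' := by linarith
  have eq1' : Q' 1 = P' 1 + w1' := by linarith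
  have er0' : R' 0 = P' 0 + z0' := by linarith
  have er1' : R' 1 = P' 1 + z1' := by linarith
  rw [eq0', eq1'] at hd'
  rw [eq0, eq1, eq0', eq1'] at h1
  rw [er0, er1, er0', er1'] at h2
  rw [eq0, eq1, eq0', eq1', er0, er1, er0', er1'] at h3
  have hD' : w0' ^ 2 + w1' ^ 2 ≠ 0 := by ring_nf at hd' ⊢; exact hd'
  have k1 : w0 ^ 2 + w1 ^ 2 = w0' ^ 2 + w1' ^ 2 := by linear_combination h1
  have k2 : z0 ^ 2 + z1 ^ 2 = z0' ^ 2 + z1' ^ 2 := by linear_combination h2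
  have k3 : w0 * z0 + w1 * z1 = w0' * z0' + w1' * z1' := by
    linear_combination (h1 + h2 - h3) / 2
  obtain ⟨s, hs, hdet⟩ : ∃ s : ℝ, s ^ 2 = 1 ∧
      s * (w0 * z1 - w1 * z0) = w0' * z1' - w1' * z0' := by
    have : (w0 * z1 - w1 * z0) ^ 2 = (w0' * z1' - w1' * z0') ^ 2 := by
      linear_combination (z0 ^ 2 + z1 ^ 2) * k1 + (w0' ^ 2 + w1' ^ 2) * k2
        - (w0 * z0 + w1 * z1 + (w0' * z0' + w1' * z1')) * k3
    rcases sq_eq_sq_iff_eq_or_eq_neg.1 this with h | h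
    · exact ⟨1, by norm_num, by linarith⟩
    · exact ⟨-1, by norm_num, by linarith⟩
  obtain ⟨d, hdd⟩ : ∃ d, d = w0' ^ 2 + w1' ^ 2 := ⟨_, rfl⟩
  rw [← hdd] at hD' k1
  let f : Plane → Plane := fun x => pt
    (P' 0 + ((w0 * (x 0 - P 0) + w1 * (x 1 - P 1)) * w0'
      - s * (w0 * (x 1 - P 1) - w1 * (x 0 - P 0)) * w1') / d)
    (P' 1 + ((w0 * (x 0 - P 0) + w1 * (x 1 - P 1)) * w1'
      + s * (w0 * (x 1 - P 1) - w1 * (x 0 - P 0)) * w0') / d)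
  let g : Plane → Plane := fun x => pt
    (P 0 + ((w0' * (x 0 - P' 0) + w1' * (x 1 - P' 1)) * w0
      - s * (w0' * (x 1 - P' 1) - w1' * (x 0 - P' 0)) * w1) / d)
    (P 1 + ((w0' * (x 0 - P' 0) + w1' * (x 1 - P' 1)) * w1
      + s * (w0' * (x 1 - P' 1) - w1' * (x 0 - P' 0)) * w0) / d)
  have hfg : ∀ x, f (g x) = x := by
    intro x
    have g0 : (g x) 0 = P 0 + ((w0' * (x 0 - P' 0) + w1' * (x 1 - P' 1)) * w0
      - s * (w0' * (x 1 - P' 1) - w1' * (x 0 - P' 0)) * w1) / d := by simp [g, pt]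
    have g1 : (g x) 1 = P 1 + ((w0' * (x 0 - P' 0) + w1' * (x 1 - P' 1)) * w1
      + s * (w0' * (x 1 - P' 1) - w1' * (x 0 - P' 0)) * w0) / d := by simp [g, pt]
    have eA : w0 * ((g x) 0 - P 0) + w1 * ((g x) 1 - P 1)
        = w0' * (x 0 - P' 0) + w1' * (x 1 - P' 1) := by
      rw [g0, g1]
      field_simp
      linear_combination (w0' * (x 0 - P' 0) + w1' * (x 1 - P' 1)) * k1
    have eB : s * (w0 * ((g x) 1 - P 1) - w1 * ((g x) 0 - P 0))
        = w0' * (x 1 - P' 1) - w1' * (x 0 - P' 0) := by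
      rw [g0, g1]
      field_simp
      linear_combination s ^ 2 * (w0' * (x 1 - P' 1) - w1' * (x 0 - P' 0)) * k1
        + d * (w0' * (x 1 - P' 1) - w1' * (x 0 - P' 0)) * hs
    ext i
    fin_cases i
    · change P' 0 + ((w0 * ((g x) 0 - P 0) + w1 * ((g x) 1 - P 1)) * w0'
        - s * (w0 * ((g x) 1 - P 1) - w1 * ((g x) 0 - P 0)) * w1') / d = x 0
      rw [eA, eB]
      field_simp
      linear_combination (P' 0 - x 0) * hdd
    · change P' 1 + ((w0 * ((g x) 0 - P 0) + w1 * ((g x) 1 - P 1)) * w1'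
        + s * (w0 * ((g x) 1 - P 1) - w1 * ((g x) 0 - P 0)) * w0') / d = x 1
      rw [eA, eB]
      field_simp
      linear_combination (P' 1 - x 1) * hdd
  have hf : Isometry f := by
    apply Isometry.of_dist_eq
    intro x y
    rw [dist_iff' _ _ dist_nonneg, ← (dist_iff' x y dist_nonneg).1 rfl]
    have f0 : (f x) 0 - (f y) 0 = ((w0 * (x 0 - y 0) + w1 * (x 1 - y 1)) * w0'
      - s * (w0 * (x 1 - y 1) - w1 * (x 0 - y 0)) * w1') / d := by
      simp [f, pt]; ring
    have f1 : (f x) 1 - (f y) 1 = ((w0 * (x 0 - y 0) + w1 * (x 1 - y 1)) * w1'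
      + s * (w0 * (x 1 - y 1) - w1 * (x 0 - y 0)) * w0') / d := by
      simp [f, pt]; ring
    rw [f0, f1]
    generalize x 0 - y 0 = A
    generalize x 1 - y 1 = B
    field_simp
    linear_combination -((w0 * A + w1 * B) ^ 2 + s ^ 2 * (w0 * B - w1 * A) ^ 2) * hdd
      + d * (w0 * B - w1 * A) ^ 2 * hs + d * (A ^ 2 + B ^ 2) * k1
  refine ⟨IsometryEquiv.mk' f g hfg hf, ?_, ?_, ?_⟩
  · change f P = P'
    ext i; fin_cases i <;> simp [f, pt]
  · change f Q = Q'
    ext i; fin_cases i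
    · simp [f, pt, eq0, eq1, eq0', eq1']
      field_simp
      linear_combination w0' * k1
    · simp [f, pt, eq0, eq1, eq0', eq1']
      field_simp
      linear_combination w1' * k1
  · change f R = R'
    ext i; fin_cases i
    · simp [f, pt, er0, er1, er0', er1']
      field_simp
      linear_combination w0' * k3 - w1' * hdet - z0' * hdd
    · simp [f, pt, er0, er1, er0', er1']
      field_simp
      linear_combination w1' * k3 + w0' * hdet - z1' * hdd

lemma Tiles.image {p q r : ℝ} {S : Set Plane} {N : ℕ} (h : Tiles p q r S N) (f : Plane ≃ᵢ Plane) :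
    Tiles p q r (f '' S) N := by
  obtain ⟨ι, _, T, hc, hT, hS, hd⟩ := h
  refine ⟨ι, inferInstance, fun i => f '' T i, hc, ?_, ?_, ?_⟩
  · intro i
    obtain ⟨P, Q, R, h1, h2, h3, h4⟩ := hT i
    exact ⟨f P, f Q, f R, by rw [f.dist_eq, h1], by rw [f.dist_eq, h2],
      by rw [f.dist_eq, h3], by
      simp only [h4]; exact isometry_hull f P Q R⟩
  · rw [hS, Set.image_iUnion]
  · intro i j hij
    have e : ∀ A : Set Plane, interior (f '' A) = f '' interior A := fun A =>
      (f.toHomeomorph.image_interior A).symm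
    rw [e, e, ← Set.image_inter f.injective, hd i j hij, Set.image_empty]

lemma tiles_of {p q r : ℝ} {S : Set Plane} {N : ℕ} (h : TilesInto S N p q r) : Tiles p q r S N := by
  obtain ⟨f, Δ, hΔ, hS, hd⟩ := h
  refine ⟨Fin N, inferInstance, fun i => f i '' Δ, by simp, ?_, hS, hd⟩
  intro i
  obtain ⟨P, Q, R, h1, h2, h3, h4⟩ := hΔ
  exact ⟨(f i) P, (f i) Q, (f i) R, by rw [(f i).dist_eq, h1], by rw [(f i).dist_eq, h2],
      by rw [(f i).dist_eq, h3], by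
      simp only [h4]; exact isometry_hull (f i) P Q R⟩

lemma of_tiles {p q r : ℝ} {S : Set Plane} {N : ℕ} (hr : r ≠ 0) (hN : 0 < N)
    (h : Tiles p q r S N) : TilesInto S N p q r := by
  obtain ⟨ι, _, T, hc, hT, hS, hd⟩ := h
  let e : Fin N ≃ ι := (Fintype.equivFinOfCardEq hc).symm
  obtain ⟨P, Q, R, h1, h2, h3, h4⟩ := hT (e ⟨0, hN⟩)
  have : ∀ i, ∃ f : Plane ≃ᵢ Plane, f '' (T (e ⟨0, hN⟩)) = T i := by
    intro i
    obtain ⟨P', Q', R', h1', h2', h3', h4'⟩ := hT i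
    have hPQ : P ≠ Q := by
      rintro rfl
      simp at h3
      exact hr h3.symm
    obtain ⟨f, e1, e2, e3⟩ := sss P Q R P' Q' R' hPQ (by rw [h3, h3']) (by rw [h2, h2'])
      (by rw [h1, h1'])
    exact ⟨f, by rw [h4, h4', isometry_hull, e1, e2, e3]⟩
  choose f hf using this
  refine ⟨fun i => f (e i), T (e ⟨0, hN⟩), hT _, ?_, ?_⟩
  · simp only [hf]
    rw [hS]
    exact (e.surjective.iUnion_comp T).symm
  · intro i j hij
    simp only [hf]
    exact hd _ _ (fun h => hij (e.injective h))

lemma Tiles.union {p q r : ℝ} {S S' : Set Plane} {N N' : ℕ} (h : Tiles p q r S N)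
    (h' : Tiles p q r S' N') (hi : interior S ∩ interior S' = ∅) :
    Tiles p q r (S ∪ S') (N + N') := by
  obtain ⟨ι, _, T, hc, hT, hS, hd⟩ := h
  obtain ⟨ι', _, T', hc', hT', hS', hd'⟩ := h'
  have s1 : ∀ i, interior (T i) ⊆ interior S := fun i =>
    interior_mono (by rw [hS]; exact Set.subset_iUnion T i)
  have s2 : ∀ i, interior (T' i) ⊆ interior S' := fun i =>
    interior_mono (by rw [hS']; exact Set.subset_iUnion T' i)
  refine ⟨ι ⊕ ι', inferInstance, Sum.elim T T', by simp [hc, hc'], ?_, ?_, ?_⟩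
  · rintro (i | i)
    · exact hT i
    · exact hT' i
  · rw [Set.iUnion_sum, hS, hS']; rfl
  · rintro (i | i) (j | j) hij
    · exact hd i j (fun h => hij (by rw [h]))
    · exact Set.subset_empty_iff.1 (hi ▸ Set.inter_subset_inter (s1 i) (s2 j))
    · rw [Set.inter_comm]
      exact Set.subset_empty_iff.1 (hi ▸ Set.inter_subset_inter (s1 j) (s2 i))
    · exact hd' i j (fun h => hij (by rw [h]))

/-- Splitting a triangle `A B C` along `B E`, `E` on `A C`. -/
lemma split {p q r : ℝ} (A B C E : Plane) (l : ℝ) (hl : 0 < l) (hl1 : l < 1)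
    (e0 : E 0 = A 0 + l * (C 0 - A 0)) (e1 : E 1 = A 1 + l * (C 1 - A 1))
    (hdet : (B 0 - A 0) * (C 1 - A 1) - (B 1 - A 1) * (C 0 - A 0) ≠ 0) {N N' : ℕ}
    (h : Tiles p q r (convexHull ℝ {A, B, E}) N) (h' : Tiles p q r (convexHull ℝ {E, B, C}) N') :
    Tiles p q r (convexHull ℝ {A, B, C}) (N + N') := by
  have hU : convexHull ℝ {A, B, C} = convexHull ℝ {A, B, E} ∪ convexHull ℝ {E, B, C} := by
    ext x
    simp only [Set.mem_union, mem_tri, e0, e1]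
    constructor
    · rintro ⟨s, t, hs, ht, hst, h0, h1⟩
      by_cases hc : t ≤ l * (1 - s)
      · refine Or.inl ⟨s, t / l, hs, by positivity, ?_, ?_, ?_⟩
        · have : t / l ≤ 1 - s := by rw [div_le_iff₀ hl]; linarith
          linarith
        · rw [h0]; field_simp; ring
        · rw [h1]; field_simp; ring
      · push Not at hc
        have hl' : 0 < 1 - l := by linarith
        refine Or.inr ⟨s, (t - l * (1 - s)) / (1 - l), hs, by
          apply div_nonneg <;> linarith, ?_, ?_, ?_⟩
        · have : (t - l * (1 - s)) / (1 - l) ≤ 1 - s := by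
            rw [div_le_iff₀ hl']; nlinarith
          linarith
        · rw [h0]; field_simp; ring
        · rw [h1]; field_simp; ring
    · rintro (⟨s, t, hs, ht, hst, h0, h1⟩ | ⟨s, t, hs, ht, hst, h0, h1⟩)
      · refine ⟨s, l * t, hs, by positivity, by nlinarith, ?_, ?_⟩
        · rw [h0]; ring
        · rw [h1]; ring
      · refine ⟨s, l * (1 - s - t) + t, hs, ?_, by nlinarith, ?_, ?_⟩
        · have : 0 ≤ l * (1 - s - t) := mul_nonneg hl.le (by linarith)
          linarith
        · rw [h0]; ring
        · rw [h1]; ring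
  rw [hU]
  refine h.union h' ?_
  rw [Set.eq_empty_iff_forall_notMem]
  rintro x ⟨hx, hx'⟩
  obtain ⟨D, hD⟩ : ∃ D, D = (B 0 - A 0) * (C 1 - A 1) - (B 1 - A 1) * (C 0 - A 0) := ⟨_, rfl⟩
  rw [← hD] at hdet
  have hne : (-(B 1 - E 1) * D ≠ 0 ∨ (B 0 - E 0) * D ≠ 0) := by
    by_contra hcon
    push Not at hcon
    have c1 := (mul_eq_zero.1 hcon.1).resolve_right hdet
    have c2 := (mul_eq_zero.1 hcon.2).resolve_right hdet
    apply hdet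
    rw [e0] at c2
    rw [e1] at c1
    rw [hD]
    linear_combination (C 1 - A 1) * c2 + (C 0 - A 0) * c1
  have g1 := interior_pos _ (-(B 1 - E 1) * D) ((B 0 - E 0) * D)
    (-((B 0 - E 0) * E 1 - (B 1 - E 1) * E 0) * D) hne (by
      intro y hy
      obtain ⟨s, t, hs, ht, hst, h0, h1⟩ := (mem_tri _ _ _ _).1 hy
      have : -(B 1 - E 1) * D * y 0 + (B 0 - E 0) * D * y 1
        + -((B 0 - E 0) * E 1 - (B 1 - E 1) * E 0) * D = t * (1 - l) * D ^ 2 := by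
        rw [h0, h1, e0, e1]; subst hD; ring
      rw [this]
      have : 0 < 1 - l := by linarith
      positivity) x hx'
  have hne' : (-(-(B 1 - E 1) * D) ≠ 0 ∨ -((B 0 - E 0) * D) ≠ 0) := by
    simpa using hne
  have g2 := interior_pos _ (-(-(B 1 - E 1) * D)) (-((B 0 - E 0) * D))
    (-(-((B 0 - E 0) * E 1 - (B 1 - E 1) * E 0) * D)) hne' (by
      intro y hy
      obtain ⟨s, t, hs, ht, hst, h0, h1⟩ := (mem_tri _ _ _ _).1 hy
      have : -(-(B 1 - E 1) * D) * y 0 + -((B 0 - E 0) * D) * y 1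
        + -(-((B 0 - E 0) * E 1 - (B 1 - E 1) * E 0) * D) = (1 - s - t) * l * D ^ 2 := by
        rw [h0, h1, e0, e1]; subst hD; ring
      rw [this]
      have : 0 ≤ 1 - s - t := by linarith
      positivity) x hx
  linarith


lemma hull_rot (P Q R : Plane) : convexHull ℝ {P, Q, R} = convexHull ℝ {Q, R, P} := by
  congr 1; ext x; simp; tauto

/-- The quadratic tiling. -/
lemma grid (k : ℕ) (hk : 0 < k) (p q r : ℝ) (hp : 0 ≤ p) (hq : 0 ≤ q) (hr : 0 ≤ r)
    (hnd : 4 * q ^ 2 * r ^ 2 - (q ^ 2 + r ^ 2 - p ^ 2) ^ 2 ≠ 0) (Δ : Set Plane)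
    (h : IsTriangle (k * p) (k * q) (k * r) Δ) : Tiles p q r Δ (k ^ 2) := by
  obtain ⟨P, Q, R, h1, h2, h3, rfl⟩ := h
  have hk' : (0 : ℝ) < k := by exact_mod_cast hk
  rw [dist_iff' _ _ (by positivity)] at h1 h2 h3
  obtain ⟨u0, hu0⟩ : ∃ u, u = (Q 0 - P 0) / k := ⟨_, rfl⟩
  obtain ⟨u1, hu1⟩ : ∃ u, u = (Q 1 - P 1) / k := ⟨_, rfl⟩
  obtain ⟨v0, hv0⟩ : ∃ u, u = (R 0 - P 0) / k := ⟨_, rfl⟩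
  obtain ⟨v1, hv1⟩ : ∃ u, u = (R 1 - P 1) / k := ⟨_, rfl⟩
  have eQ0 : Q 0 = P 0 + k * u0 := by rw [hu0]; field_simp; ring
  have eQ1 : Q 1 = P 1 + k * u1 := by rw [hu1]; field_simp; ring
  have eR0 : R 0 = P 0 + k * v0 := by rw [hv0]; field_simp; ring
  have eR1 : R 1 = P 1 + k * v1 := by rw [hv1]; field_simp; ring
  rw [eQ0, eQ1, eR0, eR1] at h1
  rw [eR0, eR1] at h2
  rw [eQ0, eQ1] at h3
  have hk2 : (k : ℝ) ^ 2 ≠ 0 := by positivity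
  have n1 : (u0 - v0) ^ 2 + (u1 - v1) ^ 2 = p ^ 2 := by
    apply mul_left_cancel₀ hk2; linear_combination h1
  have n2 : v0 ^ 2 + v1 ^ 2 = q ^ 2 := by
    apply mul_left_cancel₀ hk2; linear_combination h2
  have n3 : u0 ^ 2 + u1 ^ 2 = r ^ 2 := by
    apply mul_left_cancel₀ hk2; linear_combination h3
  obtain ⟨D, hD⟩ : ∃ D, D = u0 * v1 - u1 * v0 := ⟨_, rfl⟩
  have hD0 : D ≠ 0 := by
    intro h0
    apply hnd
    rw [← n1, ← n2, ← n3]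
    rw [h0] at hD
    linear_combination -4 * (u0 * v1 - u1 * v0) * hD
  clear h1 h2 h3 hu0 hu1 hv0 hv1 hnd
  let T : ℝ → ℝ → ℝ → Set Plane := fun X Y e => convexHull ℝ
    {pt (P 0 + X * u0 + Y * v0) (P 1 + X * u1 + Y * v1),
     pt (P 0 + (X + e) * u0 + Y * v0) (P 1 + (X + e) * u1 + Y * v1),
     pt (P 0 + X * u0 + (Y + e) * v0) (P 1 + X * u1 + (Y + e) * v1)}
  let σ : Plane → ℝ := fun x => (v1 / D) * x 0 + (-v0 / D) * x 1 + (-(P 0 * v1 - P 1 * v0) / D)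
  let τ : Plane → ℝ := fun x => (-u1 / D) * x 0 + (u0 / D) * x 1 + (-(u0 * P 1 - u1 * P 0) / D)
  have hx0 : ∀ x, x 0 = P 0 + σ x * u0 + τ x * v0 := by
    intro x; simp only [σ, τ]; field_simp
    linear_combination (x 0 - P 0) * hD
  have hx1 : ∀ x, x 1 = P 1 + σ x * u1 + τ x * v1 := by
    intro x; simp only [σ, τ]; field_simp
    linear_combination (x 1 - P 1) * hD
  have hσ : ∀ x : Plane, ∀ s t : ℝ, x 0 = P 0 + s * u0 + t * v0 → x 1 = P 1 + s * u1 + t * v1 →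
      σ x = s ∧ τ x = t := by
    intro x s t a0 a1
    constructor
    · simp only [σ, a0, a1]; field_simp; rw [hD]; ring
    · simp only [τ, a0, a1]; field_simp; rw [hD]; ring
  have memT : ∀ X Y e x, e ^ 2 = 1 → (x ∈ T X Y e ↔
      0 ≤ e * (σ x - X) ∧ 0 ≤ e * (τ x - Y) ∧ e * (σ x - X) + e * (τ x - Y) ≤ 1) := by
    intro X Y e x he
    simp only [T, mem_tri]
    constructor
    · rintro ⟨s, t, hs, ht, hst, a0, a1⟩
      simp [pt] at a0 a1
      obtain ⟨b0, b1⟩ := hσ x (X + s * e) (Y + t * e) (by rw [a0]; ring) (by rw [a1]; ring)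
      rw [b0, b1]
      have c1 : e * (X + s * e - X) = s := by linear_combination s * he
      have c2 : e * (Y + t * e - Y) = t := by linear_combination t * he
      rw [c1, c2]
      exact ⟨hs, ht, hst⟩
    · rintro ⟨a1, a2, a3⟩
      refine ⟨_, _, a1, a2, a3, ?_, ?_⟩
      · rw [hx0 x]; simp [pt]
        linear_combination (-(σ x - X) * u0 - (τ x - Y) * v0) * he
      · rw [hx1 x]; simp [pt]
        linear_combination (-(σ x - X) * u1 - (τ x - Y) * v1) * he
  have intT : ∀ X Y e x, e ^ 2 = 1 → x ∈ interior (T X Y e) →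
      0 < e * (σ x - X) ∧ 0 < e * (τ x - Y) ∧ e * (σ x - X) + e * (τ x - Y) < 1 := by
    intro X Y e x he hx
    have he0 : e ≠ 0 := by rintro rfl; norm_num at he
    have nz : ∀ A B : ℝ, (A ≠ 0 ∨ B ≠ 0) → (e * (A / D) ≠ 0 ∨ e * (B / D) ≠ 0) := by
      intro A B hAB
      rcases hAB with h | h
      · left; positivity
      · right; positivity
    refine ⟨?_, ?_, ?_⟩
    · have := interior_pos _ (e * (v1 / D)) (e * (-v0 / D))
        (e * (-(P 0 * v1 - P 1 * v0) / D) - e * X) (nz _ _ (by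
          by_contra hc
          push Not at hc
          apply hD0; rw [hD]; linear_combination u0 * hc.1 + u1 * hc.2)) (by
          intro y hy
          have := ((memT X Y e y he).1 hy).1
          simp only [σ] at this
          linarith) x hx
      simp only [σ]
      linarith
    · have := interior_pos _ (e * (-u1 / D)) (e * (u0 / D))
        (e * (-(u0 * P 1 - u1 * P 0) / D) - e * Y) (nz _ _ (by
          by_contra hc
          push Not at hc
          apply hD0; rw [hD]; linear_combination v0 * hc.1 + v1 * hc.2)) (by
          intro y hy
          have := ((memT X Y e y he).1 hy).2.1
          simp only [τ] at this
          linarith) x hx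
      simp only [τ]
      linarith
    · have := interior_pos _ (e * ((u1 - v1) / D)) (e * ((v0 - u0) / D))
        (1 + e * X + e * Y - e * (-(P 0 * v1 - P 1 * v0) / D) - e * (-(u0 * P 1 - u1 * P 0) / D))
        (nz _ _ (by
          by_contra hc
          push Not at hc
          apply hD0; rw [hD]; linear_combination (-u0) * hc.1 - u1 * hc.2)) (by
          intro y hy
          have := ((memT X Y e y he).1 hy).2.2
          simp only [σ, τ] at this
          have e1 : e * ((u1 - v1) / D) * y 0 = - (e * (v1 / D) * y 0) - e * (-u1 / D) * y 0 := by
            ring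
          have e2 : e * ((v0 - u0) / D) * y 1 = - (e * (-v0 / D) * y 1) - e * (u0 / D) * y 1 := by
            ring
          rw [e1, e2]
          linarith) x hx
      simp only [σ, τ]
      have e1 : e * ((u1 - v1) / D) * x 0 = - (e * (v1 / D) * x 0) - e * (-u1 / D) * x 0 := by
        ring
      have e2 : e * ((v0 - u0) / D) * x 1 = - (e * (-v0 / D) * x 1) - e * (u0 / D) * x 1 := by
        ring
      rw [e1, e2] at this
      linarith
  have triT : ∀ X Y e, e ^ 2 = 1 → IsTriangle p q r (T X Y e) := by
    intro X Y e he
    refine ⟨_, _, _, ?_, ?_, ?_, rfl⟩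
    · rw [dist_iff' _ _ hp, ← n1]; simp [pt]
      linear_combination ((u0 - v0) ^ 2 + (u1 - v1) ^ 2) * he
    · rw [dist_iff' _ _ hq, ← n2]; simp [pt]
      linear_combination (v0 ^ 2 + v1 ^ 2) * he
    · rw [dist_iff' _ _ hr, ← n3]; simp [pt]
      linear_combination (u0 ^ 2 + u1 ^ 2) * he
  have memBig : ∀ x, x ∈ convexHull ℝ {P, Q, R} ↔ 0 ≤ σ x ∧ 0 ≤ τ x ∧ σ x + τ x ≤ k := by
    intro x
    rw [mem_tri, eQ0, eQ1, eR0, eR1]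
    constructor
    · rintro ⟨s, t, hs, ht, hst, a0, a1⟩
      obtain ⟨b0, b1⟩ := hσ x (s * k) (t * k) (by rw [a0]; ring) (by rw [a1]; ring)
      rw [b0, b1]
      exact ⟨by positivity, by positivity, by nlinarith⟩
    · rintro ⟨a1, a2, a3⟩
      refine ⟨σ x / k, τ x / k, by positivity, by positivity, ?_, ?_, ?_⟩
      · rw [← add_div, div_le_one hk']; exact a3
      · rw [hx0 x]; field_simp; ring
      · rw [hx1 x]; field_simp; ring
  clear_value T σ τ
  let T' : Fin k × Fin k → Set Plane := fun ij =>
    if (ij.1 : ℕ) + ij.2 < k then T (ij.1 : ℕ) (ij.2 : ℕ) 1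
    else T (k - (ij.1 : ℕ)) (k - (ij.2 : ℕ)) (-1)
  have up : ∀ i j : Fin k, (i : ℕ) + j < k → T' (i, j) = T (i : ℕ) (j : ℕ) 1 := by
    intro i j h; simp [T', h]
  have dn : ∀ i j : Fin k, ¬ ((i : ℕ) + j < k) →
      T' (i, j) = T (k - (i : ℕ)) (k - (j : ℕ)) (-1) := by
    intro i j h; simp only [T', h, if_false]
  refine ⟨Fin k × Fin k, inferInstance, T', by simp [sq], ?_, ?_, ?_⟩
  · rintro ⟨i, j⟩
    by_cases hij : (i : ℕ) + j < k
    · rw [up i j hij]; exact triT _ _ _ (by norm_num)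
    · rw [dn i j hij]; exact triT _ _ _ (by norm_num)
  · ext x
    rw [memBig, Set.mem_iUnion]
    constructor
    · rintro ⟨a1, a2, a3⟩
      have f1 := Nat.floor_le a1
      have f2 := Nat.lt_floor_add_one (σ x)
      have f3 := Nat.floor_le a2
      have f4 := Nat.lt_floor_add_one (τ x)
      generalize hi : ⌊σ x⌋₊ = i at *
      generalize hj : ⌊τ x⌋₊ = j at *
      have mk_up : ∀ i j : ℕ, i + j < k → (i : ℝ) ≤ σ x → (j : ℝ) ≤ τ x → σ x + τ x ≤ i + j + 1 →
          ∃ ij, x ∈ T' ij := by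
        intro i j hij b1 b2 b3
        refine ⟨(⟨i, by omega⟩, ⟨j, by omega⟩), ?_⟩
        rw [up _ _ hij, memT _ _ _ _ (by norm_num)]
        simp only
        refine ⟨by linarith, by linarith, by linarith⟩
      have hijk : i + j ≤ k := by
        have : (i : ℝ) + j ≤ k := by linarith
        exact_mod_cast this
      rcases hijk.lt_or_eq with hlt | heq
      · by_cases hc : σ x + τ x ≤ i + j + 1
        · exact mk_up i j hlt f1 f3 hc
        · push Not at hc
          have h2 : i + j + 1 < k := by
            have : (i : ℝ) + j + 1 < k := by linarith
            exact_mod_cast this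
          refine ⟨(⟨k - 1 - i, by omega⟩, ⟨k - 1 - j, by omega⟩), ?_⟩
          rw [dn _ _ (by simp only; omega), memT _ _ _ _ (by norm_num)]
          have c1 : ((k - 1 - i : ℕ) : ℝ) = k - 1 - i := by
            rw [Nat.cast_sub (by omega), Nat.cast_sub (by omega)]; simp
          have c2 : ((k - 1 - j : ℕ) : ℝ) = k - 1 - j := by
            rw [Nat.cast_sub (by omega), Nat.cast_sub (by omega)]; simp
          simp only [c1, c2]
          refine ⟨by linarith, by linarith, by linarith⟩
      · have heq' : (i : ℝ) + j = k := by exact_mod_cast heq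
        rcases Nat.eq_zero_or_pos i with h0 | h0
        · have c2 : ((j - 1 : ℕ) : ℝ) = j - 1 := by
            rw [Nat.cast_sub (by omega)]; simp
          apply mk_up i (j - 1) (by omega) f1
          · rw [c2]; linarith
          · rw [c2]; linarith
        · have c2 : ((i - 1 : ℕ) : ℝ) = i - 1 := by
            rw [Nat.cast_sub (by omega)]; simp
          apply mk_up (i - 1) j (by omega) _ f3
          · rw [c2]; linarith
          · rw [c2]; linarith
    · rintro ⟨⟨i, j⟩, hx⟩
      have i0 : (0 : ℝ) ≤ (i : ℕ) := by positivity
      have j0 : (0 : ℝ) ≤ (j : ℕ) := by positivity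
      have i1 : ((i : ℕ) : ℝ) + 1 ≤ k := by exact_mod_cast i.2
      have j1 : ((j : ℕ) : ℝ) + 1 ≤ k := by exact_mod_cast j.2
      by_cases hij : (i : ℕ) + j < k
      · rw [up i j hij, memT _ _ _ _ (by norm_num)] at hx
        have : ((i : ℕ) : ℝ) + (j : ℕ) + 1 ≤ k := by exact_mod_cast hij
        obtain ⟨b1, b2, b3⟩ := hx
        refine ⟨by linarith, by linarith, by linarith⟩
      · rw [dn i j hij, memT _ _ _ _ (by norm_num)] at hx
        push Not at hij
        have : (k : ℝ) ≤ ((i : ℕ) : ℝ) + (j : ℕ) := by exact_mod_cast hij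
        obtain ⟨b1, b2, b3⟩ := hx
        refine ⟨by linarith, by linarith, by linarith⟩
  · rintro ⟨i, j⟩ ⟨i', j'⟩ hne
    rw [Set.eq_empty_iff_forall_notMem]
    rintro x ⟨hx, hx'⟩
    have key : ∀ (A B : ℤ) (z : ℝ), (A : ℝ) < z → z < A + 1 → (B : ℝ) < z → z < B + 1 →
        A = B := by
      intro A B z h1 h2 h3 h4
      have a1 : (A : ℝ) < B + 1 := by linarith
      have a2 : (B : ℝ) < A + 1 := by linarith
      have a1' : A < B + 1 := by exact_mod_cast a1
      have a2' : B < A + 1 := by exact_mod_cast a2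
      omega
    have locU : ∀ i j : Fin k, (i : ℕ) + j < k → x ∈ interior (T' (i, j)) →
        (((i : ℕ) : ℤ) : ℝ) < σ x ∧ σ x < ((i : ℕ) : ℤ) + 1 ∧
        (((j : ℕ) : ℤ) : ℝ) < τ x ∧ τ x < ((j : ℕ) : ℤ) + 1 ∧
        σ x + τ x < (i : ℕ) + (j : ℕ) + 1 := by
      intro i j hij hx
      rw [up i j hij] at hx
      obtain ⟨b1, b2, b3⟩ := intT _ _ _ _ (by norm_num) hx
      push_cast
      refine ⟨by linarith, by linarith, by linarith, by linarith, by linarith⟩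
    have locD : ∀ i j : Fin k, ¬ ((i : ℕ) + j < k) → x ∈ interior (T' (i, j)) →
        (((k : ℤ) - 1 - (i : ℕ) : ℤ) : ℝ) < σ x ∧ σ x < ((k : ℤ) - 1 - (i : ℕ) : ℤ) + 1 ∧
        (((k : ℤ) - 1 - (j : ℕ) : ℤ) : ℝ) < τ x ∧ τ x < ((k : ℤ) - 1 - (j : ℕ) : ℤ) + 1 ∧
        (k : ℝ) - 1 - (i : ℕ) + (k - 1 - (j : ℕ)) + 1 < σ x + τ x := by
      intro i j hij hx
      rw [dn i j hij] at hx
      obtain ⟨b1, b2, b3⟩ := intT _ _ _ _ (by norm_num) hx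
      push_cast
      refine ⟨by linarith, by linarith, by linarith, by linarith, by linarith⟩
    by_cases hij : (i : ℕ) + j < k <;> by_cases hij' : (i' : ℕ) + j' < k
    · obtain ⟨b1, b2, b3, b4, b5⟩ := locU i j hij hx
      obtain ⟨c1, c2, c3, c4, c5⟩ := locU i' j' hij' hx'
      have m1 := key _ _ _ b1 b2 c1 c2
      have m2 := key _ _ _ b3 b4 c3 c4
      exact hne (Prod.ext (Fin.ext (by simpa using m1)) (Fin.ext (by simpa using m2)))
    · obtain ⟨b1, b2, b3, b4, b5⟩ := locU i j hij hx
      obtain ⟨c1, c2, c3, c4, c5⟩ := locD i' j' hij' hx'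
      have m1 := key _ _ _ b1 b2 c1 c2
      have m2 := key _ _ _ b3 b4 c3 c4
      have m1' : ((i : ℕ) : ℝ) = k - 1 - (i' : ℕ) := by exact_mod_cast m1
      have m2' : ((j : ℕ) : ℝ) = k - 1 - (j' : ℕ) := by exact_mod_cast m2
      linarith
    · obtain ⟨b1, b2, b3, b4, b5⟩ := locD i j hij hx
      obtain ⟨c1, c2, c3, c4, c5⟩ := locU i' j' hij' hx'
      have m1 := key _ _ _ c1 c2 b1 b2
      have m2 := key _ _ _ c3 c4 b3 b4
      have m1' : ((i' : ℕ) : ℝ) = k - 1 - (i : ℕ) := by exact_mod_cast m1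
      have m2' : ((j' : ℕ) : ℝ) = k - 1 - (j : ℕ) := by exact_mod_cast m2
      linarith
    · obtain ⟨b1, b2, b3, b4, b5⟩ := locD i j hij hx
      obtain ⟨c1, c2, c3, c4, c5⟩ := locD i' j' hij' hx'
      have m1 := key _ _ _ b1 b2 c1 c2
      have m2 := key _ _ _ b3 b4 c3 c4
      exact hne (Prod.ext (Fin.ext (by simp only; omega)) (Fin.ext (by simp only; omega)))

theorem stmt18 (a b c : ℕ) (ha : 0 < a) (hb : 0 < b) (hc : 0 < c)
    (hab : Nat.Coprime a b) (hac : Nat.Coprime a c) (hbc : Nat.Coprime b c)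
    (h : c ^ 2 = a ^ 2 + b ^ 2 + a * b) (m : ℕ) (hm : 0 < m)
    (heq : TilesInto (EquilateralTri ((m : ℝ) * a * b)) (m ^ 2 * a * b) a b c) :
    ∀ Δ : Set Plane,
      IsTriangle ((m : ℝ) * b * c) ((m : ℝ) * a * (a + 2 * b)) ((m : ℝ) * c * (a + b)) Δ →
      TilesInto Δ (m ^ 2 * (a + 2 * b) * (a + b)) a b c := by
  rintro Δ ⟨P, Q, R, h1, h2, h3, rfl⟩
  have ha' : (0 : ℝ) < a := by exact_mod_cast ha
  have hb' : (0 : ℝ) < b := by exact_mod_cast hb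
  have hc' : (0 : ℝ) < c := by exact_mod_cast hc
  have hm' : (0 : ℝ) < m := by exact_mod_cast hm
  have hr : (c : ℝ) ^ 2 = a ^ 2 + b ^ 2 + a * b := by exact_mod_cast h
  apply of_tiles hc'.ne' (by positivity)
  rw [dist_iff' _ _ (by positivity)] at h1 h2 h3
  have hnd : 4 * (b : ℝ) ^ 2 * c ^ 2 - ((b : ℝ) ^ 2 + c ^ 2 - a ^ 2) ^ 2 ≠ 0 := by
    have : 4 * (b : ℝ) ^ 2 * c ^ 2 - ((b : ℝ) ^ 2 + c ^ 2 - a ^ 2) ^ 2 = 3 * a ^ 2 * b ^ 2 := by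
      rw [hr]; ring
    rw [this]; positivity
  obtain ⟨w0, hw0⟩ : ∃ w, w = (R 0 - P 0) / (a + 2 * b) := ⟨_, rfl⟩
  obtain ⟨w1, hw1⟩ : ∃ w, w = (R 1 - P 1) / (a + 2 * b) := ⟨_, rfl⟩
  obtain ⟨E0, hE0⟩ : ∃ w, w = P 0 + (a + b) * w0 := ⟨_, rfl⟩
  obtain ⟨E1, hE1⟩ : ∃ w, w = P 1 + (a + b) * w1 := ⟨_, rfl⟩
  obtain ⟨y0, hy0⟩ : ∃ w, w = (Q 0 - E0) / (a + b) := ⟨_, rfl⟩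
  obtain ⟨y1, hy1⟩ : ∃ w, w = (Q 1 - E1) / (a + b) := ⟨_, rfl⟩
  have eP0 : P 0 = E0 - (a + b) * w0 := by rw [hE0]; ring
  have eP1 : P 1 = E1 - (a + b) * w1 := by rw [hE1]; ring
  have eR0 : R 0 = E0 + b * w0 := by rw [hE0, hw0]; field_simp; ring
  have eR1 : R 1 = E1 + b * w1 := by rw [hE1, hw1]; field_simp; ring
  have eQ0 : Q 0 = E0 + (a + b) * y0 := by rw [hy0]; field_simp; ring
  have eQ1 : Q 1 = E1 + (a + b) * y1 := by rw [hy1]; field_simp; ring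
  clear hw0 hw1 hE0 hE1 hy0 hy1
  rw [eQ0, eQ1, eR0, eR1] at h1
  rw [eP0, eP1, eR0, eR1] at h2
  rw [eQ0, eQ1, eP0, eP1] at h3
  have n1 : w0 ^ 2 + w1 ^ 2 = (m * a) ^ 2 := by
    have : ((a : ℝ) + 2 * b) ^ 2 ≠ 0 := by positivity
    apply mul_left_cancel₀ this; linear_combination h2
  have n2 : (w0 + y0) ^ 2 + (w1 + y1) ^ 2 = (m * c) ^ 2 := by
    have : ((a : ℝ) + b) ^ 2 ≠ 0 := by positivity
    apply mul_left_cancel₀ this; linear_combination h3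
  have n3 : y0 ^ 2 + y1 ^ 2 = (m * b) ^ 2 := by
    have : ((a : ℝ) + b) * (a + 2 * b) ≠ 0 := by positivity
    apply mul_left_cancel₀ this
    linear_combination h1 + b * (a + b) * n2 - (b ^ 2 + b * (a + b)) * n1
      + (m ^ 2 * b ^ 2 + m ^ 2 * b * (a + b)) * hr
  have n4 : w0 * y0 + w1 * y1 = m ^ 2 * a * b / 2 := by
    linear_combination (n2 - n1 - n3 + m ^ 2 * hr) / 2
  have hdet : w0 * y1 - w1 * y0 ≠ 0 := by
    intro h0
    have : (w0 * y1 - w1 * y0) ^ 2 = 3 / 4 * (m ^ 2 * a * b) ^ 2 := by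
      linear_combination (y0 ^ 2 + y1 ^ 2) * n1 + (m * a) ^ 2 * n3
        - (w0 * y0 + w1 * y1 + m ^ 2 * a * b / 2) * n4
    rw [h0] at this
    have h5 : 0 < 3 / 4 * ((m : ℝ) ^ 2 * a * b) ^ 2 := by positivity
    rw [← this] at h5
    norm_num at h5
  let E : Plane := pt E0 E1
  let F : Plane := pt (E0 + a * y0) (E1 + a * y1)
  have e0 : E 0 = E0 := by simp [E, pt]
  have e1 : E 1 = E1 := by simp [E, pt]
  have f0 : F 0 = E0 + a * y0 := by simp [F, pt]
  have f1 : F 1 = E1 + a * y1 := by simp [F, pt]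
  clear_value E F
  have t1 : Tiles a b c (convexHull ℝ {P, Q, E}) ((m * (a + b)) ^ 2) := by
    apply grid _ (by positivity) _ _ _ ha'.le hb'.le hc'.le hnd
    refine ⟨Q, P, E, ?_, ?_, ?_, ?_⟩
    · rw [dist_iff' _ _ (by positivity), e0, e1, eP0, eP1]; push_cast
      linear_combination (a + b) ^ 2 * n1
    · rw [dist_iff' _ _ (by positivity), e0, e1, eQ0, eQ1]; push_cast
      linear_combination (a + b) ^ 2 * n3
    · rw [dist_iff' _ _ (by positivity), eQ0, eQ1, eP0, eP1]; push_cast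
      linear_combination (a + b) ^ 2 * n2
    · congr 1; ext x; simp; tauto
  have t2 : Tiles a b c (convexHull ℝ {Q, R, F}) ((m * b) ^ 2) := by
    apply grid _ (by positivity) _ _ _ ha'.le hb'.le hc'.le hnd
    refine ⟨Q, R, F, ?_, ?_, ?_, rfl⟩
    · rw [dist_iff' _ _ (by positivity), f0, f1, eR0, eR1]; push_cast
      linear_combination b ^ 2 * n1 + a ^ 2 * n3 - 2 * a * b * n4
    · rw [dist_iff' _ _ (by positivity), f0, f1, eQ0, eQ1]; push_cast
      linear_combination b ^ 2 * n3
    · rw [dist_iff' _ _ (by positivity), eQ0, eQ1, eR0, eR1]; push_cast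
      linear_combination h1
  have t3 : Tiles a b c (convexHull ℝ {F, R, E}) (m ^ 2 * a * b) := by
    have hX : (0 : ℝ) ≤ (m : ℝ) * a * b := by positivity
    have hX' : (0 : ℝ) < (m : ℝ) * a * b := by positivity
    have s3 : Real.sqrt 3 ^ 2 = 3 := Real.sq_sqrt (by norm_num)
    have q1 : dist F R = (m : ℝ) * a * b := by
      rw [dist_iff' _ _ hX, f0, f1, eR0, eR1]
      linear_combination b ^ 2 * n1 + a ^ 2 * n3 - 2 * a * b * n4
    have q2 : dist F E = (m : ℝ) * a * b := by
      rw [dist_iff' _ _ hX, f0, f1, e0, e1]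
      linear_combination a ^ 2 * n3
    have q3 : dist R E = (m : ℝ) * a * b := by
      rw [dist_iff' _ _ hX, eR0, eR1, e0, e1]
      linear_combination b ^ 2 * n1
    generalize (m : ℝ) * a * b = X at *
    have r1 : dist (pt 0 0) (pt X 0) = X := by
      rw [dist_iff' _ _ hX]; simp [pt]
    have r2 : dist (pt 0 0) (pt (X / 2) (X * Real.sqrt 3 / 2)) = X := by
      rw [dist_iff' _ _ hX]; simp [pt]
      linear_combination X ^ 2 / 4 * s3
    have r3 : dist (pt X 0) (pt (X / 2) (X * Real.sqrt 3 / 2)) = X := by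
      rw [dist_iff' _ _ hX]; simp [pt]
      linear_combination X ^ 2 / 4 * s3
    obtain ⟨f, g1, g2, g3⟩ := sss (pt 0 0) (pt X 0) (pt (X / 2) (X * Real.sqrt 3 / 2)) F R E
      (by rw [← dist_pos, r1]; exact hX') (by rw [r1, q1]) (by rw [r2, q2]) (by rw [r3, q3])
    have := (tiles_of heq).image f
    rw [EquilateralTri, isometry_hull, g1, g2, g3] at this
    exact this
  have t4 := split Q R E F (b / (a + b)) (by positivity)
    (by rw [div_lt_one (by positivity)]; linarith)
    (by rw [f0, eQ0, e0]; field_simp; ring) (by rw [f1, eQ1, e1]; field_simp; ring)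
    (by
      rw [eR0, eR1, eQ0, eQ1, e0, e1]
      have : (b : ℝ) * (a + b) * (w0 * y1 - w1 * y0) ≠ 0 := by positivity
      intro h0
      apply this
      linear_combination -h0) t2 t3
  rw [hull_rot, hull_rot] at t4
  have t5 := split P Q R E ((a + b) / (a + 2 * b)) (by positivity)
    (by rw [div_lt_one (by positivity)]; linarith)
    (by rw [e0, eP0, eR0]; field_simp; ring) (by rw [e1, eP1, eR1]; field_simp; ring)
    (by
      rw [eR0, eR1, eQ0, eQ1, eP0, eP1]
      have : ((a : ℝ) + 2 * b) * (a + b) * (w0 * y1 - w1 * y0) ≠ 0 := by positivity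
      intro h0
      apply this
      linear_combination -h0) t1 t4
  convert t5 using 1
  ring
end
end
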